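/- arXiv:2303.06003 — 2 statements merged into one kernel-verified Lean document; each statement's English description precedes it below -/
import Mathlib

section
/- Let G be a finite group acting transitively on a finite set Ω with point stabilizer H, and assume p is a prime dividing |H|. Let C^rat be a rational conjugacy class of elements of order p of G of maximal fixity, and let X = C^rat ∩ H. If the action of G on Ω is binary, then no element of X is joined by an edge of Γ(C^rat) to an element of C^rat \ X; that is, there are no x ∈ X and y ∈ C^rat \ X with xy = yx and xy⁻¹ ∈ C^rat. -/
/-!
Write `F(g)` for the set of fixed points of `g`, and let `x` and `y` be commuting elements such that
`x` has order `p` while `y` and `z = x y⁻¹` have order `p` and maximal fixity. Then `F(x) ⊆ F(y)`,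
so `y` lies in every point stabilizer containing `x`.

In a binary action any three elements have a "majority": some `g` agrees with the common value of
two of them wherever such a value exists. Take the majority `g` of `1`, `x` and `y`. It fixes
`F(x) ∪ F(y)` pointwise and acts as `x` on `F(z)`, the set where `x` and `y` agree. If `x` is
nontrivial on `F(z)`, which it preserves, then `p` divides the order of `g`, so a power of `g` of
order `p` fixes `F(x) ∪ F(y)`, and maximality of `F(y)` forces `F(x) ⊆ F(y)`. Otherwise
`F(z) ⊆ F(x)`, and maximality of `F(z)` gives `F(z) = F(x)`, so `y` agrees with `x` on `F(x)`.
-/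

/-- An action of `G` on `Ω` is *binary* if for every `n` and every pair of tuples
`I, J ∈ Ωⁿ`, whenever `I` and `J` are 2-related, there is a single element of `G`
mapping `I` to `J` entrywise. -/
def IsBinary (G Ω : Type*) [Group G] [MulAction G Ω] : Prop :=
  ∀ (n : ℕ) (I J : Fin n → Ω),
    (∀ i j : Fin n, ∃ g : G, g • I i = J i ∧ g • I j = J j) →
    ∃ g : G, ∀ i, g • I i = J i

/-- Two subgroups of `G` are conjugate when one is the image of the other under
conjugation by some element of `G`. -/
def SubgroupsConj {G : Type*} [Group G] (A B : Subgroup G) : Prop :=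
  ∃ k : G, Subgroup.map (MulAut.conj k).toMonoidHom A = B

section

open MulAction

section FixedPoints

variable {G Ω : Type*} [Group G] [MulAction G Ω]

lemma fixedBy_subset_of_mem_zpowers {a b : G} (h : b ∈ Subgroup.zpowers a) :
    fixedBy Ω a ⊆ fixedBy Ω b :=
  fun _ hω => smul_eq_self_of_mem_zpowers h hω

lemma fixedBy_eq_of_zpowers_eq {a b : G} (h : Subgroup.zpowers a = Subgroup.zpowers b) :
    fixedBy Ω a = fixedBy Ω b :=
  (fixedBy_subset_of_mem_zpowers (h ▸ Subgroup.mem_zpowers b)).antisymm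
    (fixedBy_subset_of_mem_zpowers (h ▸ Subgroup.mem_zpowers a))

lemma mem_fixedBy_mul_inv_iff_of_commute {x y : G} (h : Commute x y) {ω : Ω} :
    ω ∈ fixedBy Ω (x * y⁻¹) ↔ x • ω = y • ω := by
  rw [mem_fixedBy, h.inv_right.eq, mul_smul, inv_smul_eq_iff]

lemma exists_orderOf_eq_and_fixedBy_subset {g : G} (hg : IsOfFinOrder g) {n : ℕ}
    (hn : n ∣ orderOf g) : ∃ h : G, orderOf h = n ∧ fixedBy Ω g ⊆ fixedBy Ω h :=
  ⟨g ^ (orderOf g / n), orderOf_pow_orderOf_div hg.orderOf_pos.ne' hn,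
    fixedBy_subset_of_mem_zpowers (Subgroup.npow_mem_zpowers g _)⟩

end FixedPoints

section Period

variable {M α : Type*} [Monoid M] [MulAction M α] {x g : M} {S : Set α} {a : α}

lemma pow_smul_eq_pow_smul_of_eqOn (hS : Set.MapsTo (x • ·) S S) (hg : Set.EqOn (g • ·) (x • ·) S)
    (ha : a ∈ S) (n : ℕ) : g ^ n • a = x ^ n • a := by
  induction n generalizing a with
  | zero => simp
  | succ n ih =>
    have hga : g • a = x • a := hg ha
    rw [pow_succ, pow_succ, mul_smul, mul_smul, hga, ih (hS ha)]

lemma period_eq_period_of_eqOn (hS : Set.MapsTo (x • ·) S S) (hg : Set.EqOn (g • ·) (x • ·) S)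
    (ha : a ∈ S) : period g a = period x a :=
  Nat.dvd_right_iff_eq.1 fun n => by
    rw [← pow_smul_eq_iff_period_dvd, ← pow_smul_eq_iff_period_dvd,
      pow_smul_eq_pow_smul_of_eqOn hS hg ha]

lemma period_eq_orderOf_of_prime (hx : (orderOf x).Prime) (ha : x • a ≠ a) :
    period x a = orderOf x :=
  ((Nat.dvd_prime hx).1 (period_dvd_orderOf x a)).resolve_left (ha ∘ period_eq_one_iff.1)

lemma orderOf_dvd_orderOf_of_eqOn (hx : (orderOf x).Prime) (hS : Set.MapsTo (x • ·) S S)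
    (hg : Set.EqOn (g • ·) (x • ·) S) (ha : a ∈ S) (hxa : x • a ≠ a) : orderOf x ∣ orderOf g := by
  rw [← period_eq_orderOf_of_prime hx hxa, ← period_eq_period_of_eqOn hS hg ha]
  exact period_dvd_orderOf g a

end Period

namespace IsBinary

variable {G Ω : Type*} [Group G] [MulAction G Ω]

lemma exists_forall_smul_eq {ι : Type*} [Finite ι] (hbin : IsBinary G Ω) (I J : ι → Ω)
    (hIJ : ∀ i j, ∃ g : G, g • I i = J i ∧ g • I j = J j) : ∃ g : G, ∀ i, g • I i = J i := by
  obtain ⟨n, ⟨e⟩⟩ := Finite.exists_equiv_fin ι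
  obtain ⟨g, hg⟩ := hbin n (I ∘ e.symm) (J ∘ e.symm) fun _ _ => hIJ _ _
  exact ⟨g, fun i => by simpa using hg (e i)⟩

lemma exists_majority [Finite Ω] (hbin : IsBinary G Ω) (a b c : G) :
    ∃ g : G, ∀ ω : Ω, (a • ω = b • ω → g • ω = a • ω) ∧ (a • ω = c • ω → g • ω = a • ω) ∧
      (b • ω = c • ω → g • ω = b • ω) := by
  classical
  let J (ω : Ω) : Ω := if b • ω = c • ω then b • ω else a • ω
  let S : Set Ω := {ω | a • ω = b • ω ∨ a • ω = c • ω ∨ b • ω = c • ω}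
  -- At each point of `S` at least two of `a`, `b`, `c` take the value `J`, so for any two points
  -- one of the three takes the value `J` at both.
  have two_of_three (ω : Ω) (hω : ω ∈ S) : (a • ω = J ω ∧ b • ω = J ω) ∨
      (a • ω = J ω ∧ c • ω = J ω) ∨ (b • ω = J ω ∧ c • ω = J ω) := by
    grind
  obtain ⟨g, hg⟩ := hbin.exists_forall_smul_eq (fun i : S => i.1) (fun i => J i.1) fun i j => by
    have hi := two_of_three i i.2
    have hj := two_of_three j j.2
    grind
  have hgJ (ω : Ω) (hω : ω ∈ S) : g • ω = J ω := hg ⟨ω, hω⟩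
  refine ⟨g, fun ω => ⟨fun h => ?_, fun h => ?_, fun h => ?_⟩⟩
  · grind [hgJ ω (.inl h)]
  · grind [hgJ ω (.inr (.inl h))]
  · grind [hgJ ω (.inr (.inr h))]

end IsBinary

namespace SubgroupsConj

variable {G : Type*} [Group G] {a b : G}

lemma exists_zpowers_conj_eq (h : SubgroupsConj (Subgroup.zpowers a) (Subgroup.zpowers b)) :
    ∃ k : G, Subgroup.zpowers (k * a * k⁻¹) = Subgroup.zpowers b :=
  h.imp fun k hk => (MonoidHom.map_zpowers (MulAut.conj k).toMonoidHom a).symm.trans hk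

lemma orderOf_eq (h : SubgroupsConj (Subgroup.zpowers a) (Subgroup.zpowers b)) :
    orderOf a = orderOf b := by
  obtain ⟨k, hk⟩ := h.exists_zpowers_conj_eq
  rw [← Nat.card_zpowers b, ← hk, Nat.card_zpowers]
  exact (SemiconjBy.conj_mk k a).orderOf_eq k

open Pointwise in
lemma ncard_fixedBy_eq {Ω : Type*} [MulAction G Ω]
    (h : SubgroupsConj (Subgroup.zpowers a) (Subgroup.zpowers b)) :
    (fixedBy Ω a).ncard = (fixedBy Ω b).ncard := by
  obtain ⟨k, hk⟩ := h.exists_zpowers_conj_eq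
  rw [← fixedBy_eq_of_zpowers_eq hk, ← smul_fixedBy, Set.ncard_smul_set]

end SubgroupsConj

/-- `g` is an element of order `p` of *maximal fixity* in the action of `G` on `Ω`: no element of
order `p` has more fixed points. As `Set.ncard` is `0` on infinite sets, this is meaningful for
finite `Ω` only. -/
structure HasMaximalFixity {G : Type*} (Ω : Type*) [Group G] [MulAction G Ω] (p : ℕ) (g : G) :
    Prop where
  orderOf_eq : orderOf g = p
  ncard_fixedBy_le : ∀ h : G, orderOf h = p → (fixedBy Ω h).ncard ≤ (fixedBy Ω g).ncard

namespace HasMaximalFixity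

variable {G Ω : Type*} [Group G] [MulAction G Ω] {p : ℕ} {a b : G}

lemma of_subgroupsConj (ha : HasMaximalFixity Ω p a)
    (h : SubgroupsConj (Subgroup.zpowers a) (Subgroup.zpowers b)) : HasMaximalFixity Ω p b where
  orderOf_eq := h.orderOf_eq.symm.trans ha.orderOf_eq
  ncard_fixedBy_le c hc := (ha.ncard_fixedBy_le c hc).trans_eq h.ncard_fixedBy_eq

lemma fixedBy_eq_of_subset [Finite Ω] (ha : HasMaximalFixity Ω p a) (hb : orderOf b = p)
    (hab : fixedBy Ω a ⊆ fixedBy Ω b) : fixedBy Ω a = fixedBy Ω b :=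
  Set.eq_of_subset_of_ncard_le hab (ha.ncard_fixedBy_le b hb)

end HasMaximalFixity

theorem no_edge_leaving_stabilizer_of_binary_general {G Ω : Type*} [Group G] [MulAction G Ω]
    [Finite Ω] (hG : IsMulTorsion G) (hbin : IsBinary G Ω) {p : ℕ} (hp : p.Prime) {x y : G}
    (hx : orderOf x = p) (hy : HasMaximalFixity Ω p y) (hz : HasMaximalFixity Ω p (x * y⁻¹))
    (hxy : Commute x y) : fixedBy Ω x ⊆ fixedBy Ω y := by
  have mem_z {ω : Ω} : ω ∈ fixedBy Ω (x * y⁻¹) ↔ x • ω = y • ω :=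
    mem_fixedBy_mul_inv_iff_of_commute hxy
  obtain ⟨g, hg⟩ := hbin.exists_majority 1 x y
  simp only [one_smul] at hg
  have hgx : fixedBy Ω x ⊆ fixedBy Ω g := fun ω hω => (hg ω).1 (Eq.symm hω)
  have hgy : fixedBy Ω y ⊆ fixedBy Ω g := fun ω hω => (hg ω).2.1 (Eq.symm hω)
  have hgz : Set.EqOn (g • ·) (x • ·) (fixedBy Ω (x * y⁻¹)) := fun ω hω => (hg ω).2.2 (mem_z.1 hω)
  by_cases hzx : fixedBy Ω (x * y⁻¹) ⊆ fixedBy Ω x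
  · intro ω hω
    have hωz : ω ∈ fixedBy Ω (x * y⁻¹) := (hz.fixedBy_eq_of_subset hx hzx).superset hω
    exact (mem_z.1 hωz).symm.trans hω
  · obtain ⟨ω, hωz, hωx⟩ := Set.not_subset.1 hzx
    have hxz : Commute (x * y⁻¹) x := (Commute.refl x).mul_left hxy.symm.inv_left
    have mapsTo_x : Set.MapsTo (x • ·) (fixedBy Ω (x * y⁻¹)) (fixedBy Ω (x * y⁻¹)) := fun _ =>
      (smul_mem_of_set_mem_fixedBy (fixedBy_mem_fixedBy_of_commute hxz)).2
    have hpg : p ∣ orderOf g := hx ▸ orderOf_dvd_orderOf_of_eqOn (hx ▸ hp) mapsTo_x hgz hωz hωx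
    obtain ⟨h, hh, hgh⟩ := exists_orderOf_eq_and_fixedBy_subset (Ω := Ω) (hG g) hpg
    rw [hy.fixedBy_eq_of_subset hh (hgy.trans hgh)]
    exact hgx.trans hgh

end

/-- Lemma: let `G` act transitively on `Ω` with point stabilizer `H`, `p` a prime dividing
`|H|`, and `C^rat` a rational conjugacy class of elements of order `p` of maximal fixity.
Put `X = C^rat ∩ H`. If the action is binary, then no element of `X` is joined by an edge of
`Γ(C^rat)` to an element of `C^rat \ X`. -/
theorem no_edge_leaving_stabilizer_of_binary
    (G Ω : Type*) [Group G] [Finite G] [Fintype Ω] [MulAction G Ω]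
    [MulAction.IsPretransitive G Ω]
    (ω₀ : Ω) (H : Subgroup G) (hH : H = MulAction.stabilizer G ω₀)
    (p : ℕ) (hp : p.Prime) (hpH : p ∣ Nat.card H)
    (g₀ : G) (hg₀ : orderOf g₀ = p)
    (Crat : Set G)
    (hCrat : Crat = {x : G | SubgroupsConj (Subgroup.zpowers g₀) (Subgroup.zpowers x)})
    (hmax : ∀ x : G, orderOf x = p →
      Nat.card ↥(MulAction.fixedBy Ω x) ≤ Nat.card ↥(MulAction.fixedBy Ω g₀))
    (hbin : IsBinary G Ω) :
    ∀ x ∈ Crat ∩ (H : Set G), ∀ y ∈ Crat \ (Crat ∩ (H : Set G)),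
      ¬ (Commute x y ∧ x * y⁻¹ ∈ Crat) := by
  subst hH hCrat
  have hC {x : G} (hx : SubgroupsConj (Subgroup.zpowers g₀) (Subgroup.zpowers x)) :
      HasMaximalFixity Ω p x := .of_subgroupsConj ⟨hg₀, hmax⟩ hx
  rintro x ⟨hx, hxω⟩ y ⟨hy, hyω⟩ ⟨hxy, hz⟩
  exact hyω ⟨hy, no_edge_leaving_stabilizer_of_binary_general isMulTorsion_of_finite hbin hp
    (hC hx).orderOf_eq (hC hy) (hC hz) hxy hxω⟩
end

section
/- Let K be a subgroup of the alternating group Aₙ of odd order, let p be a prime, and let s, t ∈ K be p-cycles. Then either the supports of s and t are disjoint, or ⟨s⟩ = ⟨t⟩. In particular, s and t commute. -/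
/-!
An element of a group of odd order is a power of its square, so no element of `K` interchanges
two distinct points. Suppose the supports `S` of `s` and `T` of `t` meet.

If neither support contains the other, pick `x ∈ S \ T` and `y ∈ T \ S`, and `h ∈ ⟨s, t⟩` with
`h y = x`. As `h` preserves `S ∪ T` and `|S \ T| < |S|`, some `c ∈ S` satisfies `h c ∈ T`. The
pairs `(y, x)`, `(y, c)`, `(x, h c)`, `(x, y)` then lie in one `K`-orbit, so an element of `K`
interchanges `x` and `y`.

If the supports coincide, label them by `ZMod p` so that `s` becomes `x ↦ x + 1`, and let `D` be
the set of differences of the orbital of `(0, 1)`. Then `t` maps pairs with difference in `D` to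
pairs with difference in `D`, and `D ∩ -D = ∅` by odd order, so `2 |D| < p`. Müller's proof of
Burnside's theorem on groups of prime degree now shows that `t` is affine: if `f` is the
polynomial of degree less than `p` representing `t`, then
`∑ d ∈ D, f (X + d) ^ m = ∑ d ∈ D, (f + d) ^ m` as long as `m * deg f < p`. If `deg f ≥ 2`,
comparing coefficients makes the power sums of `D` of exponents `1, …, m * deg f` vanish one
after the other, and `m` can be chosen with `|D| ≤ m * deg f`; but the first `|D|` power sums of
a nonempty set of nonzero elements cannot all vanish. An affine permutation without fixed points
is a translation, that is, a power of `s`.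
-/

open Equiv Polynomial

section PowerSums

variable {R : Type*} [CommRing R] {D : Finset R}

lemma exists_sum_pow_ne_zero [IsDomain R] (h0 : 0 ∉ D) (hD : D.Nonempty) :
    ∃ w, 0 < w ∧ w ≤ D.card ∧ ∑ d ∈ D, d ^ w ≠ 0 := by
  by_contra! h
  obtain ⟨d, hd⟩ := hD
  let v : Fin D.card → R := fun i => D.equivFin.symm i
  have hv : v = 0 := by
    refine Matrix.eq_zero_of_forall_pow_sum_mul_pow_eq_zero (f := v)
      (Subtype.val_injective.comp D.equivFin.symm.injective) fun j => ?_
    calc ∑ i, v i * v i ^ (j : ℕ) = ∑ i, v i ^ (j + 1 : ℕ) := by simp only [pow_succ']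
      _ = ∑ d : D, (d : R) ^ (j + 1 : ℕ) :=
        D.equivFin.symm.sum_comp fun d : D => (d : R) ^ (j + 1 : ℕ)
      _ = ∑ d ∈ D, d ^ (j + 1 : ℕ) := D.sum_coe_sort fun d => d ^ (j + 1 : ℕ)
      _ = 0 := h _ j.val.succ_pos j.isLt
  have hvd : v (D.equivFin ⟨d, hd⟩) = d := by simp [v]
  exact h0 (by rwa [← hvd, hv, Pi.zero_apply] at hd)

lemma sum_sum_range_mul_pow {N : ℕ} (hN : 0 < N) (c : ℕ → R)
    (hc : ∀ j, 0 < j → j < N → c j = 0 ∨ ∑ d ∈ D, d ^ j = 0) :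
    ∑ d ∈ D, ∑ j ∈ Finset.range N, c j * d ^ j = D.card * c 0 := by
  simp_rw [Finset.sum_comm (s := D), ← Finset.mul_sum]
  rw [Finset.sum_eq_single_of_mem 0 (Finset.mem_range.2 hN) fun j hj hj0 =>
    mul_eq_zero_of_ne_zero_imp_eq_zero fun h =>
      (hc j (Nat.pos_of_ne_zero hj0) (Finset.mem_range.1 hj)).resolve_left h]
  simp [mul_comm]

variable {w : ℕ} (hD : ∀ j, 0 < j → j < w → ∑ d ∈ D, d ^ j = 0)
include hD

lemma coeff_sum_taylor_of_sum_pow_eq_zero (hw : 0 < w) {g : R[X]} {n : ℕ}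
    (hn : n + w = g.natDegree) :
    (∑ d ∈ D, taylor d g).coeff n =
      D.card * g.coeff n + g.natDegree.choose n * g.leadingCoeff * ∑ d ∈ D, d ^ w := by
  have hdeg : (hasseDeriv n g).natDegree < w + 1 := by
    have := natDegree_hasseDeriv_le g n
    omega
  simp_rw [finsetSum_coeff, taylor_coeff, eval_eq_sum_range' hdeg, Finset.sum_range_succ,
    Finset.sum_add_distrib, ← Finset.mul_sum]
  rw [sum_sum_range_mul_pow hw _ fun j hj hjw => Or.inr (hD j hj hjw)]
  simp [hasseDeriv_coeff, add_comm w, hn]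

lemma coeff_sum_add_C_pow_of_sum_pow_eq_zero {f : R[X]} (hf : 1 < f.natDegree) {m n : ℕ}
    (hn : n + w = m * f.natDegree) :
    (∑ d ∈ D, (f + C d) ^ m).coeff n = D.card * (f ^ m).coeff n := by
  have hexp (d : R) : ((f + C d) ^ m).coeff n =
      ∑ j ∈ Finset.range (m + 1), (m.choose j * (f ^ (m - j)).coeff n) * d ^ j := by
    rw [add_comm, add_pow, finsetSum_coeff]
    refine Finset.sum_congr rfl fun j _ => ?_
    rw [← C_eq_natCast, ← C_pow, coeff_mul_C, coeff_C_mul]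
    ring
  simp_rw [finsetSum_coeff, hexp]
  rw [sum_sum_range_mul_pow m.succ_pos]
  · simp
  · intro j hj hjm
    refine (lt_or_ge j w).symm.imp (fun hwj => ?_) (hD j hj)
    -- `(m - j) * deg f + 2 * j ≤ m * deg f = n + w ≤ n + j`
    have hlt : (m - j) * f.natDegree < n := by
      obtain ⟨k, rfl⟩ := Nat.exists_eq_add_of_le (Nat.le_of_lt_succ hjm)
      rw [Nat.add_sub_cancel_left]
      nlinarith
    rw [coeff_eq_zero_of_natDegree_lt (natDegree_pow_le.trans_lt hlt), mul_zero]

lemma sum_pow_eq_zero_of_sum_taylor_pow_eq [IsDomain R] (hw : 0 < w) {f : R[X]}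
    (hf : 1 < f.natDegree) {m : ℕ}
    (hfD : ∑ d ∈ D, taylor d (f ^ m) = ∑ d ∈ D, (f + C d) ^ m) {n : ℕ}
    (hn : n + w = m * f.natDegree) (hchoose : ((m * f.natDegree).choose n : R) ≠ 0) :
    ∑ d ∈ D, d ^ w = 0 := by
  have hcoeff := congrArg (coeff · n) hfD
  rw [← natDegree_pow] at hchoose
  have hlead : (f ^ m).leadingCoeff ≠ 0 := by
    rw [leadingCoeff_pow]
    exact pow_ne_zero _ (leadingCoeff_ne_zero.2 (ne_zero_of_natDegree_gt hf))
  simp only [coeff_sum_add_C_pow_of_sum_pow_eq_zero hD hf hn, add_eq_left,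
    coeff_sum_taylor_of_sum_pow_eq_zero hD hw (hn.trans (natDegree_pow f m).symm)] at hcoeff
  exact (mul_eq_zero.1 hcoeff).resolve_left (mul_ne_zero hchoose hlead)

end PowerSums

section FiniteField

variable {F : Type*} [Field F] [Fintype F]

lemma exists_natDegree_lt_card_eval_eq (T : F → F) :
    ∃ f : F[X], f.natDegree < Fintype.card F ∧ ∀ x, f.eval x = T x := by
  classical
  refine ⟨Lagrange.interpolate Finset.univ id T, ?_, fun x =>
    Lagrange.eval_interpolate_at_node T Function.injective_id.injOn (Finset.mem_univ x)⟩
  have hdeg := Lagrange.degree_interpolate_lt (s := Finset.univ) T Function.injective_id.injOn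
  rcases eq_or_ne (Lagrange.interpolate Finset.univ id T) 0 with h | h
  · rw [h, natDegree_zero]
    exact Fintype.card_pos
  · rwa [natDegree_lt_iff_degree_lt h]

lemma sum_taylor_pow_eq_sum_add_C_pow {f : F[X]} {D : Finset F}
    (hinj : Function.Injective fun x => f.eval x)
    (hD : ∀ x, ∀ d ∈ D, f.eval (x + d) - f.eval x ∈ D) {m : ℕ}
    (hm : m * f.natDegree < Fintype.card F) :
    ∑ d ∈ D, taylor d (f ^ m) = ∑ d ∈ D, (f + C d) ^ m := by
  have hperm (x : F) : ∑ d ∈ D, f.eval (x + d) ^ m = ∑ d ∈ D, (f.eval x + d) ^ m := by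
    have hmaps : Set.MapsTo (fun d => f.eval (x + d) - f.eval x) D D := hD x
    have hinjOn : Set.InjOn (fun d => f.eval (x + d) - f.eval x) D := fun a _ b _ hab =>
      add_left_cancel (hinj (sub_left_injective hab))
    refine Finset.sum_nbij _ hmaps hinjOn
      (Finset.surjOn_of_injOn_of_card_le _ hmaps hinjOn le_rfl) fun d _ => ?_
    rw [add_sub_cancel]
  rw [← sub_eq_zero]
  refine eq_zero_of_natDegree_lt_card_of_eval_eq_zero _ Function.injective_id (fun x => ?_) ?_
  · simp [eval_finsetSum, taylor_eval, hperm]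
  · refine lt_of_le_of_lt (natDegree_sub_le_of_le (natDegree_sum_le_of_forall_le _ _ fun d _ => ?_)
      (natDegree_sum_le_of_forall_le _ _ fun d _ => ?_)) ((max_self _).trans_lt hm)
    · rw [natDegree_taylor, natDegree_pow]
    · rw [natDegree_pow, natDegree_add_C]

end FiniteField

lemma exists_mul_lt_le_two_mul {r q : ℕ} (hr : 0 < r) (hrq : r < q) :
    ∃ m, m * r < q ∧ q ≤ 2 * (m * r) := by
  have hlt := Nat.div_mul_le_self (q - 1) r
  have hle := Nat.lt_div_mul_add (a := q - 1) hr
  have hr' : r ≤ (q - 1) / r * r := Nat.le_mul_of_pos_left r (Nat.div_pos (by omega) hr)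
  exact ⟨(q - 1) / r, by omega, by omega⟩

section ZMod

variable {p : ℕ} [Fact p.Prime] {D : Finset (ZMod p)}

lemma natDegree_le_one_of_forall_eval_sub_mem {f : (ZMod p)[X]} (hfp : f.natDegree < p)
    (hinj : Function.Injective fun x => f.eval x) (h0 : 0 ∉ D) (hne : D.Nonempty)
    (hcard : 2 * D.card < p) (hD : ∀ x, ∀ d ∈ D, f.eval (x + d) - f.eval x ∈ D) :
    f.natDegree ≤ 1 := by
  by_contra! hf
  obtain ⟨m, hm, hpm⟩ := exists_mul_lt_le_two_mul (Nat.zero_lt_of_lt hf) hfp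
  have hsum := sum_taylor_pow_eq_sum_add_C_pow hinj hD (m := m) (by rwa [ZMod.card])
  have hzero (w : ℕ) (hw : 0 < w) (hwm : w ≤ m * f.natDegree) : ∑ d ∈ D, d ^ w = 0 := by
    induction w using Nat.strong_induction_on with
    | h w ih =>
      refine sum_pow_eq_zero_of_sum_taylor_pow_eq (w := w)
        (fun j hj hjw => ih j hjw hj (by omega)) hw hf hsum (Nat.sub_add_cancel hwm) ?_
      rw [Ne, ZMod.natCast_eq_zero_iff, ← Nat.Prime.coprime_iff_not_dvd Fact.out]
      exact Nat.Prime.coprime_choose_of_lt Fact.out hm (Nat.sub_le _ _)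
  obtain ⟨w, hw, hwD, hwne⟩ := exists_sum_pow_ne_zero h0 hne
  exact hwne (hzero w hw (by omega))

lemma exists_eq_mul_add_of_forall_sub_mem {T : ZMod p → ZMod p} (hT : Function.Injective T)
    (h0 : 0 ∉ D) (hne : D.Nonempty) (hcard : 2 * D.card < p)
    (hD : ∀ x, ∀ d ∈ D, T (x + d) - T x ∈ D) : ∃ a b, ∀ x, T x = a * x + b := by
  obtain ⟨f, hfp, hf⟩ := exists_natDegree_lt_card_eval_eq T
  obtain rfl : (fun x => f.eval x) = T := funext hf
  rw [ZMod.card] at hfp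
  obtain ⟨a, b, rfl⟩ := exists_eq_X_add_C_of_natDegree_le_one
    (natDegree_le_one_of_forall_eval_sub_mem hfp hT h0 hne hcard hD)
  exact ⟨a, b, fun x => by simp⟩

end ZMod

lemma apply_eq_self_of_apply_apply_eq_self {α : Type*} {g : Perm α} (hg : Odd (orderOf g)) {a : α}
    (h : g (g a) = a) : g a = a := by
  obtain ⟨m, hm⟩ := exists_pow_eq_self_of_coprime (Nat.coprime_two_left.2 hg)
  rw [← hm]
  exact Perm.pow_apply_eq_self_of_apply_eq_self h m

lemma odd_orderOf_of_mem {G : Type*} [Group G] {K : Subgroup G} (hK : Odd (Nat.card K)) {g : G}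
    (hg : g ∈ K) : Odd (orderOf g) :=
  hK.of_dvd_nat (Subgroup.orderOf_dvd_natCard K hg)

section OrbitalDifferences

variable {A : Type*} [AddGroup A]

/-- The set of differences `y - x` of the pairs `(x, y)` in the orbital of `(0, e)`. When `G`
contains all translations, this set determines the orbital. -/
def orbitalDifferences (G : Subgroup (Perm A)) (e : A) : Set A :=
  {d | ∃ g ∈ G, g e - g 0 = d}

variable {G : Subgroup (Perm A)} {e : A}

lemma zero_notMem_orbitalDifferences (he : e ≠ 0) : 0 ∉ orbitalDifferences G e := by
  rintro ⟨g, -, h⟩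
  exact he (g.injective (sub_eq_zero.1 h))

lemma self_mem_orbitalDifferences : e ∈ orbitalDifferences G e :=
  ⟨1, G.one_mem, by simp⟩

variable (hG : ∀ a, Equiv.addRight a ∈ G)
include hG

lemma apply_add_sub_apply_mem_orbitalDifferences {g : Perm A} (hg : g ∈ G) (x : A) {d : A}
    (hd : d ∈ orbitalDifferences G e) : g (d + x) - g x ∈ orbitalDifferences G e := by
  obtain ⟨k, hk, rfl⟩ := hd
  refine ⟨g * Equiv.addRight (-k 0 + x) * k, G.mul_mem (G.mul_mem hg (hG _)) hk, ?_⟩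
  simp [sub_eq_add_neg, add_assoc]

lemma neg_notMem_orbitalDifferences (hodd : Odd (Nat.card G)) (he : e ≠ 0) {d : A}
    (hd : d ∈ orbitalDifferences G e) : -d ∉ orbitalDifferences G e := by
  rintro ⟨k, hk, hkd⟩
  obtain ⟨g, hg, hgd⟩ := id hd
  let h : Perm A := Equiv.addRight (-k e) * k * g⁻¹ * Equiv.addRight (g 0)
  have hh : h ∈ G := G.mul_mem (G.mul_mem (G.mul_mem (hG _) hk) (G.inv_mem hg)) (hG _)
  have h0 : h 0 = d := by
    rw [← neg_neg d, ← hkd, neg_sub]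
    simp [h, sub_eq_add_neg]
  have hd0 : h d = 0 := by simp [h, ← hgd]
  have hfix : h 0 = 0 :=
    apply_eq_self_of_apply_apply_eq_self (odd_orderOf_of_mem hodd hh) (by rw [h0, hd0])
  exact zero_notMem_orbitalDifferences he ((h0.symm.trans hfix) ▸ hd)

end OrbitalDifferences

lemma two_mul_card_lt_of_forall_neg_notMem {A : Type*} [AddGroup A] [Fintype A] {D : Finset A}
    (hD : ∀ d ∈ D, -d ∉ D) : 2 * D.card < Fintype.card A := by
  classical
  have h0 : (0 : A) ∉ D := fun h => hD 0 h (by rwa [neg_zero])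
  have hdisj : Disjoint D (D.map (Equiv.neg A).toEmbedding) :=
    Finset.disjoint_left.2 fun d hd => by simpa [neg_eq_iff_eq_neg] using hD d hd
  have hlt : (D ∪ D.map (Equiv.neg A).toEmbedding).card < Fintype.card A :=
    Finset.card_lt_univ_of_notMem (x := 0) (by simpa using h0)
  rwa [Finset.card_union_of_disjoint hdisj, Finset.card_map, ← two_mul] at hlt

lemma eq_one_of_forall_mul_add_ne {F : Type*} [DivisionRing F] {a b : F}
    (h : ∀ x, a * x + b ≠ x) : a = 1 := by
  by_contra ha
  have hb : (1 - a) * ((1 - a)⁻¹ * b) = b := mul_inv_cancel_left₀ (sub_ne_zero.2 (Ne.symm ha)) b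
  rw [sub_mul, one_mul, sub_eq_iff_eq_add'] at hb
  exact h _ hb.symm

section PrimeDegree

variable {p : ℕ} [Fact p.Prime]

lemma exists_eq_mul_add_of_mem_of_odd_card {G : Subgroup (Perm (ZMod p))} (hodd : Odd (Nat.card G))
    (hG : ∀ a, Equiv.addRight a ∈ G) {g : Perm (ZMod p)} (hg : g ∈ G) :
    ∃ a b, ∀ x, g x = a * x + b := by
  let D : Finset (ZMod p) := (orbitalDifferences G 1).toFinite.toFinset
  have hD {d : ZMod p} : d ∈ D ↔ d ∈ orbitalDifferences G 1 := Set.Finite.mem_toFinset _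
  have hcard : 2 * D.card < Fintype.card (ZMod p) :=
    two_mul_card_lt_of_forall_neg_notMem fun d hd hd' => neg_notMem_orbitalDifferences hG hodd
      one_ne_zero (hD.1 hd) (hD.1 hd')
  rw [ZMod.card] at hcard
  exact exists_eq_mul_add_of_forall_sub_mem g.injective
    (fun h => zero_notMem_orbitalDifferences one_ne_zero (hD.1 h))
    ⟨1, hD.2 self_mem_orbitalDifferences⟩ hcard fun x d hd =>
      add_comm d x ▸ hD.2 (apply_add_sub_apply_mem_orbitalDifferences hG hg x (hD.1 hd))

lemma exists_eq_addRight_of_mem_of_odd_card {G : Subgroup (Perm (ZMod p))} (hodd : Odd (Nat.card G))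
    (hG : ∀ a, Equiv.addRight a ∈ G) {g : Perm (ZMod p)} (hg : g ∈ G) (hfix : ∀ x, g x ≠ x) :
    ∃ b, g = Equiv.addRight b := by
  obtain ⟨a, b, hab⟩ := exists_eq_mul_add_of_mem_of_odd_card hodd hG hg
  obtain rfl : a = 1 := eq_one_of_forall_mul_add_ne (b := b) fun x => hab x ▸ hfix x
  exact ⟨b, Equiv.ext fun x => by simp [hab]⟩

end PrimeDegree

lemma exists_extendDomain_eq {α A : Type*} {P : α → Prop} [DecidablePred P] (φ : A ≃ Subtype P)
    {t : Perm α} (ht : ∀ x, ¬ P x → t x = x) : ∃ u : Perm A, u.extendDomain φ = t := by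
  refine ⟨φ.symm.permCongr ((Perm.subtypeEquivSubtypePerm P).symm ⟨t, ht⟩), Equiv.ext fun x => ?_⟩
  by_cases hx : P x
  · rw [Perm.extendDomain_apply_subtype _ _ hx]
    simp [Perm.subtypeEquivSubtypePerm]
  · rw [Perm.extendDomain_apply_not_subtype _ _ hx, ht x hx]

lemma exists_equiv_zmod_of_isCycleOn {α : Type*} {s : Perm α} {S : Finset α}
    (hs : s.IsCycleOn S) (hne : S.Nonempty) {p : ℕ} (hcard : S.card = p) :
    ∃ φ : ZMod p ≃ {x // x ∈ S}, ∀ i, s (φ i) = φ (i + 1) := by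
  obtain ⟨x, hx⟩ := hne
  have hp : NeZero p := ⟨hcard ▸ Finset.card_ne_zero_of_mem hx⟩
  let f (i : ZMod p) : {x // x ∈ S} := ⟨(s ^ (i.cast : ℤ)) x, (hs.1.perm_zpow _).mapsTo hx⟩
  have hf (z : ℤ) : (f z : α) = (s ^ z) x := by
    rw [hs.zpow_apply_eq_zpow_apply hx, hcard, ← ZMod.intCast_eq_intCast_iff,
      ZMod.intCast_zmod_cast]
  have hbij : Function.Bijective f := by
    refine (Fintype.bijective_iff_surjective_and_card f).2 ⟨fun y => ?_, ?_⟩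
    · obtain ⟨z, hz⟩ := hs.2 hx y.2
      exact ⟨z, Subtype.ext ((hf z).trans hz)⟩
    · rw [ZMod.card, Fintype.card_coe, hcard]
  refine ⟨Equiv.ofBijective f hbij, fun i => ?_⟩
  obtain ⟨z, rfl⟩ := ZMod.intCast_surjective i
  rw [Equiv.ofBijective_apply, Equiv.ofBijective_apply, ← Int.cast_one, ← Int.cast_add, hf, hf,
    add_comm, zpow_add, zpow_one, Perm.mul_apply]

lemma exists_mem_apply_mem_of_mapsTo_union {α : Type*} [DecidableEq α] {f : α → α}
    (hf : Function.Injective f) {A B : Finset α} (hAB : ¬ Disjoint A B)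
    (hmaps : ∀ a ∈ A, f a ∈ A ∪ B) : ∃ a ∈ A, f a ∈ B := by
  by_contra! hB
  have hcard : A.card ≤ (A \ B).card := Finset.card_le_card_of_injOn f
    (fun a ha => Finset.mem_sdiff.2
      ⟨(Finset.mem_union.1 (hmaps a ha)).resolve_right (hB a ha), hB a ha⟩) hf.injOn
  exact hAB (Finset.sdiff_eq_self_iff_disjoint.1
    (Finset.eq_of_subset_of_card_le Finset.sdiff_subset hcard))

section Cycles

variable {α : Type*} [Fintype α] [DecidableEq α] {s t : Perm α}

lemma exists_extendDomain_addRight_eq_zpow (hs : s.IsCycle) {p : ℕ} (hcard : s.support.card = p) :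
    ∃ φ : ZMod p ≃ {x // x ∈ s.support},
      ∀ z : ℤ, (Equiv.addRight (z : ZMod p)).extendDomain φ = s ^ z := by
  obtain ⟨φ, hφ⟩ := exists_equiv_zmod_of_isCycleOn
    (by simpa only [Perm.coe_support_eq_set_support] using hs.isCycleOn) hs.nonempty_support hcard
  have hone : (Equiv.addRight (1 : ZMod p)).extendDomain φ = s := Equiv.ext fun y => by
    by_cases hy : y ∈ s.support
    · obtain ⟨i, hi⟩ := φ.surjective ⟨y, hy⟩
      obtain rfl : φ i = y := congrArg Subtype.val hi
      rw [Perm.extendDomain_apply_image, Equiv.coe_addRight, hφ]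
    · rw [Perm.extendDomain_apply_not_subtype _ _ hy, Perm.notMem_support.1 hy]
  refine ⟨φ, fun z => ?_⟩
  conv_rhs => rw [← hone, ← Perm.extendDomain_zpow]
  simp

lemma mem_zpowers_of_support_eq {K : Subgroup (Perm α)} (hK : Odd (Nat.card K)) (hsK : s ∈ K)
    (htK : t ∈ K) (hs : s.IsCycle) {p : ℕ} (hp : p.Prime) (hcard : s.support.card = p)
    (hst : s.support = t.support) : t ∈ Subgroup.zpowers s := by
  have : Fact p.Prime := ⟨hp⟩
  obtain ⟨φ, hφ⟩ := exists_extendDomain_addRight_eq_zpow hs hcard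
  obtain ⟨u, rfl⟩ := exists_extendDomain_eq φ (t := t) fun x hx => by
    rwa [hst, Perm.notMem_support] at hx
  let G := K.comap (Perm.extendDomainHom φ)
  have hG : Odd (Nat.card G) :=
    hK.of_dvd_nat (K.card_comap_dvd_of_injective _ (Perm.extendDomainHom_injective φ))
  have haddRight (a : ZMod p) : Equiv.addRight a ∈ G := by
    obtain ⟨z, rfl⟩ := ZMod.intCast_surjective a
    simpa only [G, Subgroup.mem_comap, Perm.extendDomainHom_apply, hφ] using K.zpow_mem hsK z
  have hfix (i : ZMod p) : u i ≠ i := fun hi => by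
    have hφi : (φ i : α) ∈ (u.extendDomain φ).support := hst ▸ (φ i).2
    rw [Perm.mem_support, Perm.extendDomain_apply_image, hi] at hφi
    exact hφi rfl
  obtain ⟨b, rfl⟩ := exists_eq_addRight_of_mem_of_odd_card hG haddRight (show u ∈ G from htK) hfix
  obtain ⟨z, rfl⟩ := ZMod.intCast_surjective b
  exact ⟨z, (hφ z).symm⟩

lemma apply_mem_of_support_subset {f : Perm α} {A : Finset α} (hf : f.support ⊆ A) {a : α}
    (ha : a ∈ A) : f a ∈ A := by
  by_cases hfa : f a = a
  · rwa [hfa]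
  · exact hf (Perm.apply_mem_support.2 (Perm.mem_support.2 hfa))

lemma support_subset_or_support_subset {K : Subgroup (Perm α)} (hK : Odd (Nat.card K))
    (hsK : s ∈ K) (htK : t ∈ K) (hs : s.IsCycle) (ht : t.IsCycle)
    (hst : ¬ Disjoint s.support t.support) :
    s.support ⊆ t.support ∨ t.support ⊆ s.support := by
  have move {u : Perm α} (hu : u.IsCycle) {a b : α} (ha : a ∈ u.support) (hb : b ∈ u.support) :
      ∃ i : ℤ, (u ^ i) a = b :=
    hu.exists_zpow_eq (Perm.mem_support.1 ha) (Perm.mem_support.1 hb)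
  have fix {u : Perm α} {a : α} (ha : a ∉ u.support) (i : ℤ) : (u ^ i) a = a :=
    Perm.zpow_apply_eq_self_of_apply_eq_self (Perm.notMem_support.1 ha) i
  simp_rw [or_iff_not_imp_left, Finset.not_subset]
  rintro ⟨x, hxs, hxt⟩ y hyt
  by_contra hys
  obtain ⟨z, hzs, hzt⟩ := Finset.not_disjoint_iff.1 hst
  obtain ⟨i, hi⟩ := move ht hyt hzt
  obtain ⟨j, hj⟩ := move hs hzs hxs
  let h : Perm α := s ^ j * t ^ i
  have hhy : h y = x := by rw [Perm.mul_apply, hi, hj]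
  have hsupp : h.support ⊆ s.support ∪ t.support := (Perm.support_mul_le _ _).trans
    (Finset.union_subset_union (Perm.support_zpow_le s j) (Perm.support_zpow_le t i))
  obtain ⟨c, hcs, hct⟩ := exists_mem_apply_mem_of_mapsTo_union h.injective hst fun a ha =>
    apply_mem_of_support_subset hsupp (Finset.mem_union_left _ ha)
  obtain ⟨k, hk⟩ := move hs hxs hcs
  obtain ⟨l, hl⟩ := move ht hct hyt
  let g : Perm α := t ^ l * h * s ^ k
  have hgK : g ∈ K := K.mul_mem (K.mul_mem (K.zpow_mem htK l)
    (K.mul_mem (K.zpow_mem hsK j) (K.zpow_mem htK i))) (K.zpow_mem hsK k)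
  have hgy : g y = x := by simp only [g, Perm.mul_apply, fix hys, hhy, fix hxt]
  have hgx : g x = y := by simp only [g, Perm.mul_apply, hk, hl]
  have hyx : g y = y :=
    apply_eq_self_of_apply_apply_eq_self (odd_orderOf_of_mem hK hgK) (by rw [hgy, hgx])
  exact hys (hyx ▸ hgy ▸ hxs)

theorem p_cycles_in_odd_subgroup_disjoint_or_generate_same_general {p : ℕ} (hp : p.Prime)
    {K : Subgroup (Perm α)} (hodd : Odd (Nat.card K)) (hsK : s ∈ K) (htK : t ∈ K)
    (hs : s.IsCycle) (hssupp : s.support.card = p) (ht : t.IsCycle) (htsupp : t.support.card = p) :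
    (Disjoint s.support t.support ∨ Subgroup.zpowers s = Subgroup.zpowers t) ∧ Commute s t := by
  by_cases hst : Disjoint s.support t.support
  · exact ⟨Or.inl hst, (Perm.disjoint_iff_disjoint_support.2 hst).commute⟩
  have hsupp : s.support = t.support :=
    (support_subset_or_support_subset hodd hsK htK hs ht hst).elim
      (fun h => Finset.eq_of_subset_of_card_le h (htsupp.trans hssupp.symm).le)
      (fun h => (Finset.eq_of_subset_of_card_le h (hssupp.trans htsupp.symm).le).symm)
  have htz : t ∈ Subgroup.zpowers s :=
    mem_zpowers_of_support_eq hodd hsK htK hs hp hssupp hsupp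
  have hsz : s ∈ Subgroup.zpowers t :=
    mem_zpowers_of_support_eq hodd htK hsK ht hp htsupp hsupp.symm
  refine ⟨Or.inr (le_antisymm (Subgroup.zpowers_le.2 hsz) (Subgroup.zpowers_le.2 htz)), ?_⟩
  obtain ⟨z, rfl⟩ := htz
  exact (Commute.refl s).zpow_right z

end Cycles

/-- Proposition: let `K ≤ Aₙ` be a subgroup of odd order, `p` a prime, and `s, t ∈ K` two
`p`-cycles. Then either the supports of `s` and `t` are disjoint or `⟨s⟩ = ⟨t⟩`; in
particular `s` and `t` commute. -/
theorem p_cycles_in_odd_subgroup_disjoint_or_generate_same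
    (n p : ℕ) (hp : p.Prime)
    (K : Subgroup (Equiv.Perm (Fin n))) (hKA : K ≤ alternatingGroup (Fin n))
    (hodd : Odd (Nat.card K))
    (s t : Equiv.Perm (Fin n)) (hsK : s ∈ K) (htK : t ∈ K)
    (hs : s.IsCycle) (hssupp : s.support.card = p)
    (ht : t.IsCycle) (htsupp : t.support.card = p) :
    (Disjoint s.support t.support ∨ Subgroup.zpowers s = Subgroup.zpowers t) ∧
      Commute s t :=
  p_cycles_in_odd_subgroup_disjoint_or_generate_same_general hp hodd hsK htK hs hssupp ht htsupp
end
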